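/- Let φ : ℝ → ℝ be defined by φ(z) = (exp(z) − 1)/z for z ≠ 0 and φ(0) = 1. Let ρ > 0 be a real number and k a positive integer with k ≥ 2ρ. Then there exists a real polynomial p of degree at most k−1 such that for all z ∈ [−4ρ, 0], |φ(z) − p(z)| ≤ (8/(3k − 5ρ)) · ( e ρ / (k + 2ρ) )^k, where e is Euler's number. -/

import Mathlib

/-- The phi-function of exponential integrators: `φ(z) = (e^z - 1)/z`, `φ(0) = 1`. -/
noncomputable def phiFun (z : ℝ) : ℝ :=
  if z = 0 then 1 else (Real.exp z - 1) / z

/-!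
A power series `∑ cₙ xⁿ` with `cₙ ≥ 0` has an expansion `∑ a_d T_d(x)` in Chebyshev polynomials
with `a_d ≥ 0`. On `[-1, 1]` the part of degree at least `k` is at most `∑_{d ≥ k} a_d`, because
`|T_d| ≤ 1` there. For `R ≥ 1` the values `T_d(R)` are positive and increase with `d`, so this tail
is at most the value of the whole series at `R` divided by `T_k(R)`.

All derivatives of `φ(z) = ∫₀¹ e^{sz} ds` are nonnegative, so this applies to `φ(-2ρ + 2ρx)`.
With `R = cosh θ` and `e^θ = k/ρ` one has `T_k(R) = cosh (kθ) ≥ (k/ρ)^k / 2`, and `R` corresponds to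
the point `-2ρ + 2ρR = (k - ρ)²/k`, at which `φ(z) ≤ e^z / z`.
-/

open Polynomial Polynomial.Chebyshev
open scoped NNReal Nat

section Chebyshev

theorem eval_T_le_eval_T_of_natAbs_le {R : ℝ} (hR : 1 ≤ R) {m n : ℤ} (h : m.natAbs ≤ n.natAbs) :
    (T ℝ m).eval R ≤ (T ℝ n).eval R := by
  have h_abs : |(m : ℝ)| ≤ |(n : ℝ)| := mod_cast by
    rwa [Int.abs_eq_natAbs, Int.abs_eq_natAbs, Int.ofNat_le]
  rw [← Real.cosh_arcosh hR, T_real_cosh, T_real_cosh, Real.cosh_le_cosh, abs_mul, abs_mul]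
  exact mul_le_mul_of_nonneg_right h_abs (abs_nonneg _)

theorem exp_pow_div_two_le_eval_T_cosh (k : ℕ) (θ : ℝ) :
    Real.exp θ ^ k / 2 ≤ (T ℝ k).eval (Real.cosh θ) := by
  rw [T_real_cosh, Int.cast_natCast, ← Real.exp_nat_mul, Real.cosh_eq]
  linarith [Real.exp_pos (-(k * θ))]

/-- The convex cone of polynomials all of whose coefficients in the Chebyshev basis are
nonnegative. It contains the monomials, and on it truncation of the Chebyshev expansion can be
estimated by the value of the polynomial at a single point. Indexing by all of `ℤ` adds no
generators, as `T (-d) = T d`, and makes `2 X T d = T (d + 1) + T (d - 1)` valid for every `d`. -/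
noncomputable def chebyshevCone : Submodule ℝ≥0 ℝ[X] :=
  Submodule.span ℝ≥0 (Set.range (T ℝ))

theorem X_mul_T_mem_chebyshevCone (d : ℤ) : X * T ℝ d ∈ chebyshevCone := by
  have h_rec : X * T ℝ d = (2⁻¹ : ℝ≥0) • (T ℝ (d + 1) + T ℝ (d - 1)) := by
    rw [T_add_one, sub_add_cancel, mul_assoc, ← C_ofNat, ← smul_eq_C_mul, NNReal.smul_def,
      smul_smul]
    norm_num
  rw [h_rec]
  exact chebyshevCone.smul_mem _ <| chebyshevCone.add_mem
    (Submodule.subset_span ⟨_, rfl⟩) (Submodule.subset_span ⟨_, rfl⟩)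

theorem X_mul_mem_chebyshevCone {P : ℝ[X]} (hP : P ∈ chebyshevCone) :
    X * P ∈ chebyshevCone := by
  induction hP using Submodule.span_induction with
  | mem _ hT =>
    obtain ⟨d, rfl⟩ := hT
    exact X_mul_T_mem_chebyshevCone d
  | zero => simp
  | add _ _ _ _ hP hQ => simpa only [mul_add] using chebyshevCone.add_mem hP hQ
  | smul a _ _ hP => simpa only [mul_smul_comm] using chebyshevCone.smul_mem a hP

theorem X_pow_mem_chebyshevCone (n : ℕ) : (X ^ n : ℝ[X]) ∈ chebyshevCone := by
  induction n with
  | zero => exact Submodule.subset_span ⟨0, by simp⟩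
  | succ n ih => simpa only [pow_succ'] using X_mul_mem_chebyshevCone ih

variable (k : ℕ) {R : ℝ}

theorem exists_degree_lt_abs_eval_T_sub_le (hR : 1 ≤ R) (d : ℤ) :
    ∃ q : ℝ[X], q.degree < k ∧ ∀ x, |x| ≤ 1 →
      |(T ℝ d).eval x - q.eval x| ≤ (T ℝ d).eval R / (T ℝ k).eval R := by
  have hTk : 0 < (T ℝ k).eval R := one_pos.trans_le (one_le_eval_T_real k hR)
  have hTd : 0 < (T ℝ d).eval R := one_pos.trans_le (one_le_eval_T_real d hR)
  rcases lt_or_ge d.natAbs k with hd | hd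
  · refine ⟨T ℝ d, by simpa [degree_T] using hd, fun x _ => ?_⟩
    rw [sub_self, abs_zero]
    positivity
  · refine ⟨0, by simp, fun x hx => ?_⟩
    calc |(T ℝ d).eval x - (0 : ℝ[X]).eval x|
        ≤ 1 := by simpa using abs_eval_T_real_le_one d hx
      _ ≤ (T ℝ d).eval R / (T ℝ k).eval R :=
          (one_le_div hTk).2 (eval_T_le_eval_T_of_natAbs_le hR (by simpa using hd))

theorem exists_degree_lt_abs_eval_sub_le_of_mem_chebyshevCone (hR : 1 ≤ R) {P : ℝ[X]}
    (hP : P ∈ chebyshevCone) :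
    ∃ q : ℝ[X], q.degree < k ∧ ∀ x, |x| ≤ 1 →
      |P.eval x - q.eval x| ≤ P.eval R / (T ℝ k).eval R := by
  induction hP using Submodule.span_induction with
  | mem _ hT =>
    obtain ⟨d, rfl⟩ := hT
    exact exists_degree_lt_abs_eval_T_sub_le k hR d
  | zero => exact ⟨0, by simp⟩
  | add P Q _ _ hP hQ =>
    obtain ⟨p, hp_deg, hp⟩ := hP
    obtain ⟨q, hq_deg, hq⟩ := hQ
    refine ⟨p + q, (degree_add_le p q).trans_lt (max_lt hp_deg hq_deg), fun x hx => ?_⟩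
    rw [eval_add, eval_add, eval_add, add_sub_add_comm, add_div]
    exact (abs_add_le _ _).trans (add_le_add (hp x hx) (hq x hx))
  | smul a P _ hP =>
    obtain ⟨p, hp_deg, hp⟩ := hP
    refine ⟨a • p, (degree_smul_le a p).trans_lt hp_deg, fun x hx => ?_⟩
    simp only [eval_smul, NNReal.smul_def, smul_eq_mul]
    rw [← mul_sub, abs_mul, NNReal.abs_eq, mul_div_assoc]
    exact mul_le_mul_of_nonneg_left (hp x hx) a.2

end Chebyshev

section PowerSeries

theorem exists_degree_lt_hasSum_eval {F ι : Type*} [Field F] [TopologicalSpace F]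
    [IsTopologicalRing F] {k : ℕ} {s : Set F} (hs : s.Infinite) {q : ι → F[X]}
    (hq : ∀ i, (q i).degree < k) (h_sum : ∀ x ∈ s, Summable fun i => (q i).eval x) :
    ∃ p : F[X], p.degree < k ∧ ∀ x, HasSum (fun i => (q i).eval x) (p.eval x) := by
  classical
  obtain ⟨t, hts, rfl⟩ := hs.exists_subset_card_eq k
  have h_inj : Set.InjOn id (t : Set F) := Set.injOn_id _
  refine ⟨Lagrange.interpolate t id fun v => ∑' i, (q i).eval v,
    Lagrange.degree_interpolate_lt _ h_inj, fun x => ?_⟩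
  have h_interp (i : ι) :
      (q i).eval x = ∑ v ∈ t, (q i).eval v * (Lagrange.basis t id v).eval x := by
    conv_lhs => rw [Lagrange.eq_interpolate h_inj (hq i)]
    simp [Lagrange.interpolate_apply, eval_finsetSum]
  simp only [h_interp, Lagrange.interpolate_apply, eval_finsetSum, eval_mul, eval_C]
  exact hasSum_sum fun v hv => (h_sum v (hts hv)).hasSum.mul_right _

theorem exists_degree_lt_abs_tsum_sub_eval_le (k : ℕ) {c : ℕ → ℝ} (hc : ∀ n, 0 ≤ c n) {R : ℝ}
    (hR : 1 ≤ R) (h_sum : Summable fun n => c n * R ^ n) :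
    ∃ p : ℝ[X], p.degree < k ∧ ∀ x, |x| ≤ 1 →
      |∑' n, c n * x ^ n - p.eval x| ≤ (∑' n, c n * R ^ n) / (T ℝ k).eval R := by
  choose q hq_deg hq using fun n =>
    exists_degree_lt_abs_eval_sub_le_of_mem_chebyshevCone k hR (X_pow_mem_chebyshevCone n)
  have h_term (x : ℝ) (hx : |x| ≤ 1) (n : ℕ) :
      ‖c n * x ^ n - (c n • q n).eval x‖ ≤ c n * R ^ n / (T ℝ k).eval R := by
    rw [eval_smul, smul_eq_mul, ← mul_sub, Real.norm_eq_abs, abs_mul, abs_of_nonneg (hc n),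
      mul_div_assoc]
    simpa using mul_le_mul_of_nonneg_left (hq n x hx) (hc n)
  have h_series (x : ℝ) (hx : |x| ≤ 1) : Summable fun n => c n * x ^ n := by
    refine .of_norm_bounded h_sum fun n => ?_
    rw [Real.norm_eq_abs, abs_mul, abs_of_nonneg (hc n), abs_pow]
    gcongr
    · exact hc n
    · exact hx.trans hR
  have h_error (x : ℝ) (hx : |x| ≤ 1) : Summable fun n => c n * x ^ n - (c n • q n).eval x :=
    .of_norm_bounded (h_sum.div_const _) (h_term x hx)
  obtain ⟨p, hp_deg, hp⟩ := exists_degree_lt_hasSum_eval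
    (Set.Icc_infinite (show (-1 : ℝ) < 1 by norm_num))
    (fun n => (degree_smul_le (c n) (q n)).trans_lt (hq_deg n))
    (fun x hx => by
      simpa using (h_series x (abs_le.2 hx)).sub (h_error x (abs_le.2 hx)))
  refine ⟨p, hp_deg, fun x hx => ?_⟩
  rw [← (hp x).tsum_eq, ← (h_series x hx).tsum_sub (hp x).summable, ← tsum_div_const]
  exact tsum_of_norm_bounded (h_sum.div_const _).hasSum (h_term x hx)

theorem exists_degree_lt_abs_sub_eval_le_of_hasSum (k : ℕ) {f : ℝ → ℝ} {b : ℕ → ℝ}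
    (hb : ∀ n, 0 ≤ b n) {w δ R : ℝ} (hδ : 0 < δ) (hR : 1 ≤ R)
    (hf : ∀ y, |y| ≤ δ * R → HasSum (fun n => b n * y ^ n) (f (w + y))) :
    ∃ p : ℝ[X], p.degree < k ∧ ∀ z ∈ Set.Icc (w - δ) (w + δ),
      |f z - p.eval z| ≤ f (w + δ * R) / (T ℝ k).eval R := by
  have h_scaled (x : ℝ) (hx : |x| ≤ R) :
      HasSum (fun n => b n * δ ^ n * x ^ n) (f (w + δ * x)) := by
    simpa only [mul_pow, mul_assoc] using hf (δ * x) (by rw [abs_mul, abs_of_pos hδ]; gcongr)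
  have hR_sum := h_scaled R (abs_of_nonneg (zero_le_one.trans hR)).le
  obtain ⟨q, hq_deg, hq⟩ := exists_degree_lt_abs_tsum_sub_eval_le k
    (fun n => mul_nonneg (hb n) (pow_nonneg hδ.le n)) hR hR_sum.summable
  have h_deg : (C δ⁻¹ * X + C (-(δ⁻¹ * w))).degree = 1 := degree_linear (inv_ne_zero hδ.ne')
  refine ⟨q.comp (C δ⁻¹ * X + C (-(δ⁻¹ * w))), ?_, fun z hz => ?_⟩
  · rwa [degree_comp (by rw [h_deg]; exact one_pos), h_deg, mul_one]
  · obtain ⟨x, rfl⟩ : ∃ x, z = w + δ * x := ⟨(z - w) / δ, by field_simp; ring⟩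
    have hx : |x| ≤ 1 := by
      rw [abs_le]
      constructor <;> nlinarith [hz.1, hz.2]
    have h_eval : (C δ⁻¹ * X + C (-(δ⁻¹ * w))).eval (w + δ * x) = x := by
      simp only [eval_add, eval_mul, eval_C, eval_X]
      field_simp
      ring
    rw [eval_comp, h_eval, ← (h_scaled x (hx.trans hR)).tsum_eq, ← hR_sum.tsum_eq]
    exact hq x hx

end PowerSeries

section Phi

theorem phiFun_eq_integral (z : ℝ) : phiFun z = ∫ s in (0 : ℝ)..1, Real.exp (s * z) := by
  unfold phiFun
  split_ifs with hz
  · simp [hz]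
  · rw [intervalIntegral.integral_comp_mul_right Real.exp hz, integral_exp]
    simp [div_eq_inv_mul]

/-- The Taylor coefficient `φ⁽ⁿ⁾(w) / n!`, obtained by differentiating `φ(w) = ∫₀¹ e^{sw} ds` under
the integral sign; in this form its nonnegativity is evident. -/
noncomputable def phiTaylorCoeff (w : ℝ) (n : ℕ) : ℝ :=
  ∫ s in (0 : ℝ)..1, Real.exp (s * w) * (s ^ n / n !)

theorem phiTaylorCoeff_nonneg (w : ℝ) (n : ℕ) : 0 ≤ phiTaylorCoeff w n := by
  refine intervalIntegral.integral_nonneg zero_le_one fun s hs => ?_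
  have := hs.1
  positivity

theorem hasSum_phiTaylorCoeff (w y : ℝ) :
    HasSum (fun n => phiTaylorCoeff w n * y ^ n) (phiFun (w + y)) := by
  simp only [phiFun_eq_integral, phiTaylorCoeff, ← intervalIntegral.integral_mul_const]
  refine intervalIntegral.hasSum_integral_of_dominated_convergence
    (fun n _ => Real.exp |w| * (|y| ^ n / n !)) ?_ ?_ ?_ ?_ ?_
  · exact fun n => (by fun_prop : Continuous _).aestronglyMeasurable
  · refine fun n => .of_forall fun s hs => ?_
    rw [Set.uIoc_of_le zero_le_one] at hs
    obtain ⟨hs₀, hs₁⟩ := hs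
    have h_exp : s * w ≤ |w| := (le_abs_self _).trans <| by
      rw [abs_mul, abs_of_pos hs₀]
      exact mul_le_of_le_one_left (abs_nonneg w) hs₁
    have h_pow : s ^ n ≤ 1 := pow_le_one₀ hs₀.le hs₁
    calc ‖Real.exp (s * w) * (s ^ n / n !) * y ^ n‖
        = Real.exp (s * w) * (s ^ n * |y| ^ n / n !) := by
          rw [Real.norm_eq_abs, abs_mul, abs_pow, abs_of_nonneg (by positivity)]
          ring
      _ ≤ Real.exp |w| * (1 * |y| ^ n / n !) := by gcongr
      _ = Real.exp |w| * (|y| ^ n / n !) := by rw [one_mul]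
  · exact .of_forall fun _ _ => (Real.summable_pow_div_factorial |y|).mul_left _
  · exact intervalIntegrable_const
  · refine .of_forall fun s _ => ?_
    have h_exp := NormedSpace.expSeries_div_hasSum_exp (s * y)
    rw [← Real.exp_eq_exp_ℝ] at h_exp
    rw [mul_add, Real.exp_add]
    convert! h_exp.mul_left (Real.exp (s * w)) using 2 with n
    ring

theorem phiFun_le_exp_div {z : ℝ} (hz : 0 < z) : phiFun z ≤ Real.exp z / z := by
  rw [phiFun, if_neg hz.ne']
  gcongr
  exact sub_le_self _ zero_le_one

end Phi

section Estimates

theorem one_add_two_mul_le_exp {u : ℝ} (hu₀ : 0 ≤ u) (hu₁ : u ≤ 3 / 5) :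
    1 + 2 * u ≤ Real.exp (2 * u - u ^ 2) := by
  have h_factor : 0 ≤ 1 - 2 * u + u ^ 2 / 2 + u * (2 - u) ^ 3 / 6 := by
    nlinarith [mul_nonneg hu₀ (sub_nonneg.2 hu₁), sq_nonneg u]
  calc 1 + 2 * u
      ≤ 1 + 2 * u + u ^ 2 * (1 - 2 * u + u ^ 2 / 2 + u * (2 - u) ^ 3 / 6) :=
        le_add_of_nonneg_right (mul_nonneg (sq_nonneg u) h_factor)
    _ = ∑ i ∈ Finset.range 4, (2 * u - u ^ 2) ^ i / i ! := by
        simp only [Finset.sum_range_succ, Finset.sum_range_zero, Nat.factorial]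
        push_cast
        ring
    _ ≤ Real.exp (2 * u - u ^ 2) := Real.sum_le_exp_of_nonneg (by nlinarith) 4

theorem mul_exp_one_sub_sq_le {u : ℝ} (hu₀ : 0 ≤ u) (hu₁ : u ≤ 3 / 5) :
    u * Real.exp ((1 - u) ^ 2) ≤ Real.exp 1 * u / (1 + 2 * u) := by
  rw [le_div_iff₀ (by positivity)]
  calc u * Real.exp ((1 - u) ^ 2) * (1 + 2 * u)
      ≤ u * Real.exp ((1 - u) ^ 2) * Real.exp (2 * u - u ^ 2) := by
        gcongr
        exact one_add_two_mul_le_exp hu₀ hu₁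
    _ = Real.exp 1 * u := by
        rw [mul_assoc, ← Real.exp_add, mul_comm]
        ring_nf

variable {ρ : ℝ} {k : ℕ}

theorem div_pow_mul_exp_le (hρ : 0 < ρ) (hk : 5 * ρ < 3 * k) :
    (ρ / k) ^ k * Real.exp ((k - ρ) ^ 2 / k) ≤ (Real.exp 1 * ρ / (k + 2 * ρ)) ^ k := by
  have hk₀ : (0 : ℝ) < k := by linarith
  have hu₁ : ρ / k ≤ 3 / 5 := by
    rw [div_le_iff₀ hk₀]
    linarith
  calc (ρ / k) ^ k * Real.exp ((k - ρ) ^ 2 / k)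
      = (ρ / k * Real.exp ((1 - ρ / k) ^ 2)) ^ k := by
        rw [mul_pow, ← Real.exp_nat_mul]
        field_simp
    _ ≤ (Real.exp 1 * (ρ / k) / (1 + 2 * (ρ / k))) ^ k := by
        gcongr
        exact mul_exp_one_sub_sq_le (by positivity) hu₁
    _ = (Real.exp 1 * ρ / (k + 2 * ρ)) ^ k := by
        field_simp

theorem two_mul_div_sub_sq_le {a b : ℝ} (hb : 0 < b) (h : 5 * b < 3 * a) :
    2 * a / (a - b) ^ 2 ≤ 8 / (3 * a - 5 * b) := by
  have hab : 0 < a - b := by linarith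
  rw [div_le_div_iff₀ (by positivity) (by linarith)]
  nlinarith [sq_nonneg (2 * a - 3 * b), sq_nonneg b]

theorem phiFun_div_eval_T_le (hρ : 0 < ρ) (hk : 5 * ρ < 3 * k) :
    phiFun ((k - ρ) ^ 2 / k) / (T ℝ k).eval (Real.cosh (Real.log (k / ρ))) ≤
      8 / (3 * k - 5 * ρ) * (Real.exp 1 * ρ / (k + 2 * ρ)) ^ k := by
  have hk₀ : (0 : ℝ) < k := by linarith
  have h_sub : 0 < k - ρ := by linarith
  have h_T : (k / ρ) ^ k / 2 ≤ (T ℝ k).eval (Real.cosh (Real.log (k / ρ))) := by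
    simpa only [Real.exp_log (div_pos hk₀ hρ)] using
      exp_pow_div_two_le_eval_T_cosh k (Real.log (k / ρ))
  calc phiFun ((k - ρ) ^ 2 / k) / (T ℝ k).eval (Real.cosh (Real.log (k / ρ)))
      ≤ Real.exp ((k - ρ) ^ 2 / k) / ((k - ρ) ^ 2 / k) / ((k / ρ) ^ k / 2) := by
        gcongr
        exact phiFun_le_exp_div (by positivity)
    _ = 2 * k / (k - ρ) ^ 2 * ((ρ / k) ^ k * Real.exp ((k - ρ) ^ 2 / k)) := by
        rw [← inv_div ρ (k : ℝ), inv_pow]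
        field_simp
    _ ≤ 8 / (3 * k - 5 * ρ) * (Real.exp 1 * ρ / (k + 2 * ρ)) ^ k := by
        gcongr ?_ * ?_
        · exact two_mul_div_sub_sq_le hρ hk
        · exact div_pow_mul_exp_le hρ hk

theorem neg_two_mul_add_two_mul_cosh_log_div {a b : ℝ} (ha : 0 < a) (hb : 0 < b) :
    -(2 * b) + 2 * b * Real.cosh (Real.log (a / b)) = (a - b) ^ 2 / a := by
  rw [Real.cosh_log (div_pos ha hb)]
  field_simp
  ring

end Estimates

theorem phi_poly_approx_second_bound_general {ρ : ℝ} (hρ : 0 < ρ) {k : ℕ} (hk : 5 * ρ < 3 * k) :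
    ∃ p : ℝ[X], p.natDegree ≤ k - 1 ∧ ∀ z ∈ Set.Icc (-(4 * ρ)) 0,
      |phiFun z - p.eval z| ≤
        8 / (3 * k - 5 * ρ) * (Real.exp 1 * ρ / (k + 2 * ρ)) ^ k := by
  have hk₀ : (0 : ℝ) < k := by linarith
  obtain ⟨p, hp_deg, hp⟩ := exists_degree_lt_abs_sub_eval_le_of_hasSum k
    (phiTaylorCoeff_nonneg _) (mul_pos two_pos hρ) (Real.one_le_cosh (Real.log (k / ρ)))
    (fun y _ => hasSum_phiTaylorCoeff (-(2 * ρ)) y)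
  rw [neg_two_mul_add_two_mul_cosh_log_div hk₀ hρ] at hp
  refine ⟨p, ?_, fun z hz => ?_⟩
  · rcases eq_or_ne p 0 with rfl | hp₀
    · simp
    · exact Nat.le_sub_one_of_lt ((natDegree_lt_iff_degree_lt hp₀).2 hp_deg)
  · exact (hp z ⟨by linarith [hz.1], by linarith [hz.2]⟩).trans (phiFun_div_eval_T_le hρ hk)

/-- Second bound of Lemma A.1: for `k ≥ 2ρ` there is a polynomial of degree at most
`k - 1` approximating `φ` on `[-4ρ, 0]` with error at most
`(8/(3k - 5ρ)) (eρ/(k + 2ρ))^k`. -/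
theorem phi_poly_approx_second_bound (ρ : ℝ) (hρ : 0 < ρ) (k : ℕ) (hk : 0 < k)
    (h2 : 2 * ρ ≤ (k : ℝ)) :
    ∃ p : Polynomial ℝ, p.natDegree ≤ k - 1 ∧
      ∀ z ∈ Set.Icc (-(4 * ρ)) 0,
        |phiFun z - p.eval z| ≤ (8 / (3 * (k : ℝ) - 5 * ρ)) *
          (Real.exp 1 * ρ / ((k : ℝ) + 2 * ρ)) ^ k :=
  phi_poly_approx_second_bound_general hρ (by linarith)
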